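/- arXiv:1707.05923 — 2 statements merged into one kernel-verified Lean document; each statement's English description precedes it below -/
import Mathlib

section
/- In the WMM axiomatic model, any execution satisfying the Inst-Order and Ld-Val axioms enforces per-location SC: for each memory address a, there exists a total order on all memory accesses (loads and stores) to a that is consistent with each processor's program order restricted to accesses of a, in which each load is placed after the store it reads from and before the next store to a in <_mo. -/
/-- Instruction operations of the WMM axiomatic model. -/
inductive IOp
  | ld (a : ℕ)
  | st (a : ℕ) (v : ℕ)
  | commit
  | reconcile
  | nm
  deriving DecidableEq

/-- An instruction: processor id, position in program order, operation. -/
structure Instr where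
  proc : ℕ
  idx : ℕ
  op : IOp
  deriving DecidableEq

/-- Per-processor program order. -/
def po (x y : Instr) : Prop := x.proc = y.proc ∧ x.idx < y.idx

/-- The WMM order-preserving table `order(X, Y)`. -/
def ordTable : IOp → IOp → Prop
  | .ld a, .ld b => a = b
  | .ld _, .st _ _ => True
  | .ld _, .reconcile => True
  | .ld _, .commit => True
  | .st a _, .st b _ => a = b
  | .st _ _, .commit => True
  | .st _ _, .ld _ => False
  | .st _ _, .reconcile => False
  | .reconcile, .ld _ => True
  | .reconcile, .st _ _ => True
  | .reconcile, .reconcile => True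
  | .reconcile, .commit => True
  | .commit, .ld _ => False
  | .commit, .st _ _ => True
  | .commit, .reconcile => True
  | .commit, .commit => True
  | _, _ => False

def isStoreTo (a : ℕ) (x : Instr) : Prop := ∃ v, x.op = IOp.st a v
def isLoadOf (a : ℕ) (x : Instr) : Prop := x.op = IOp.ld a

/-- A WMM axiomatic execution: a set of instructions `I`, a global memory
order `mo` (strict total on `I`), a reads-from relation `rf`, satisfying the
Inst-Order and Ld-Val axioms of WMM. -/
structure WMMAx where
  I : Set Instr
  mo : Instr → Instr → Prop
  rf : Instr → Instr → Prop
  mo_irrefl : ∀ x, ¬ mo x x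
  mo_trans : ∀ {x y z}, mo x y → mo y z → mo x z
  mo_total : ∀ x ∈ I, ∀ y ∈ I, x ≠ y → mo x y ∨ mo y x
  instOrder : ∀ x ∈ I, ∀ y ∈ I, po x y → ordTable x.op y.op → mo x y
  rf_mem : ∀ {S L}, rf S L → S ∈ I ∧ L ∈ I
  ldVal : ∀ {S L a}, rf S L → L.op = IOp.ld a →
    isStoreTo a S ∧ (mo S L ∨ po S L) ∧
    ∀ S' ∈ I, isStoreTo a S' → (mo S' L ∨ po S' L) → S' = S ∨ mo S' S

/-- The stores to `a` visible to the access `x`. -/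
def visStore (E : WMMAx) (a : ℕ) (x T : Instr) : Prop :=
  T ∈ E.I ∧ isStoreTo a T ∧ (T = x ∨ (isLoadOf a x ∧ (E.mo T x ∨ po T x)))

/-- The `mo`-downward closure of the visible stores. -/
def cut (E : WMMAx) (a : ℕ) (x : Instr) : Set Instr :=
  {S | S ∈ E.I ∧ isStoreTo a S ∧ ∃ T, visStore E a x T ∧ (S = T ∨ E.mo S T)}

theorem ld_not_st {a : ℕ} {x : Instr} (h : isLoadOf a x) (h' : isStoreTo a x) : False := by
  obtain ⟨v, hv⟩ := h'
  unfold isLoadOf at h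
  rw [h] at hv
  cases hv

theorem cut_down {E : WMMAx} {a : ℕ} {x S T : Instr} (hS : S ∈ E.I) (hs : isStoreTo a S)
    (hT : T ∈ cut E a x) (h : S = T ∨ E.mo S T) : S ∈ cut E a x := by
  obtain ⟨_, _, U, hU, h2⟩ := hT
  refine ⟨hS, hs, U, hU, ?_⟩
  rcases h with rfl | h
  · exact h2
  · rcases h2 with rfl | h2
    · exact Or.inr h
    · exact Or.inr (E.mo_trans h h2)

theorem cut_of_not_mem {E : WMMAx} {a : ℕ} {x S : Instr} (hS : S ∈ E.I) (hs : isStoreTo a S)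
    (h : S ∉ cut E a x) {T : Instr} (hT : T ∈ cut E a x) : E.mo T S := by
  by_cases e : S = T
  · exact absurd (e ▸ hT) h
  · rcases E.mo_total S hS T hT.1 e with h1 | h1
    · exact absurd (cut_down hS hs hT (Or.inr h1)) h
    · exact h1

theorem cut_total (E : WMMAx) (a : ℕ) (x y : Instr) :
    cut E a x ⊆ cut E a y ∨ cut E a y ⊆ cut E a x := by
  by_contra hc
  push Not at hc
  obtain ⟨h1, h2⟩ := hc
  obtain ⟨S, hS, hS'⟩ := Set.not_subset.1 h1
  obtain ⟨T, hT, hT'⟩ := Set.not_subset.1 h2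
  exact E.mo_irrefl _ (E.mo_trans (cut_of_not_mem hS.1 hS.2.1 hS' hT)
    (cut_of_not_mem hT.1 hT.2.1 hT' hS))

theorem mem_cut_store {E : WMMAx} {a : ℕ} {x S : Instr} (hx : isStoreTo a x) :
    S ∈ cut E a x → S = x ∨ E.mo S x := by
  rintro ⟨_, _, T, ⟨_, _, rfl | ⟨hl, _⟩⟩, h⟩
  · exact h
  · exact (ld_not_st hl hx).elim

theorem self_mem_cut {E : WMMAx} {a : ℕ} {x : Instr} (hI : x ∈ E.I) (hx : isStoreTo a x) :
    x ∈ cut E a x := ⟨hI, hx, x, ⟨hI, hx, Or.inl rfl⟩, Or.inl rfl⟩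

theorem cut_store_subset {E : WMMAx} {a : ℕ} {x y : Instr} (hx : isStoreTo a x)
    (h : x ∈ cut E a y) : cut E a x ⊆ cut E a y :=
  fun _ hS => cut_down hS.1 hS.2.1 h (mem_cut_store hx hS)

theorem cut_ssubset_store {E : WMMAx} {a : ℕ} {x y : Instr} (hI : y ∈ E.I) (hy : isStoreTo a y)
    (h : y ∉ cut E a x) : cut E a x ⊂ cut E a y := by
  refine (Set.ssubset_iff_of_subset ?_).2 ⟨y, self_mem_cut hI hy, h⟩
  rcases cut_total E a x y with h1 | h1
  · exact h1
  · exact absurd (h1 (self_mem_cut hI hy)) h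

theorem po_st_st {E : WMMAx} {a : ℕ} {x y : Instr} (hx : x ∈ E.I) (hy : y ∈ E.I)
    (sx : isStoreTo a x) (sy : isStoreTo a y) (h : po x y) : E.mo x y := by
  apply E.instOrder x hx y hy h
  obtain ⟨v, hv⟩ := sx
  obtain ⟨w, hw⟩ := sy
  rw [hv, hw]
  rfl

theorem po_ld_st {E : WMMAx} {a : ℕ} {x y : Instr} (hx : x ∈ E.I) (hy : y ∈ E.I)
    (sx : isLoadOf a x) (sy : isStoreTo a y) (h : po x y) : E.mo x y := by
  apply E.instOrder x hx y hy h
  obtain ⟨w, hw⟩ := sy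
  unfold isLoadOf at sx
  rw [sx, hw]
  trivial

theorem po_ld_ld {E : WMMAx} {a : ℕ} {x y : Instr} (hx : x ∈ E.I) (hy : y ∈ E.I)
    (sx : isLoadOf a x) (sy : isLoadOf a y) (h : po x y) : E.mo x y := by
  apply E.instOrder x hx y hy h
  unfold isLoadOf at sx sy
  rw [sx, sy]
  rfl

theorem po_tr {x y z : Instr} (h : po x y) (h' : po y z) : po x z :=
  ⟨h.1.trans h'.1, h.2.trans h'.2⟩

/-- The per-location order. -/
def locOrd (E : WMMAx) (a : ℕ) (x y : Instr) : Prop :=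
  cut E a x ⊂ cut E a y ∨ (cut E a x = cut E a y ∧
    ((isStoreTo a x ∧ isLoadOf a y) ∨ (isLoadOf a x ∧ isLoadOf a y ∧ E.mo x y)))

theorem locOrd_of_subset {E : WMMAx} {a : ℕ} {x y : Instr} (h : cut E a x ⊆ cut E a y)
    (h' : (isStoreTo a x ∧ isLoadOf a y) ∨ (isLoadOf a x ∧ isLoadOf a y ∧ E.mo x y)) :
    locOrd E a x y := by
  rcases h.eq_or_ssubset with h | h
  · exact Or.inr ⟨h, h'⟩
  · exact Or.inl h

/-- WMM enforces per-location SC: for each address `a` there is a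
strict total order `R` on all memory accesses to `a` that is consistent with
each processor's program order restricted to accesses of `a`, in which each
load is placed after the store it reads from and before every `mo`-later store
to `a`. -/
theorem wmm_per_location_SC (E : WMMAx) :
    ∀ a : ℕ, ∃ R : Instr → Instr → Prop,
      (∀ x, ¬ R x x) ∧
      (∀ x y z, R x y → R y z → R x z) ∧
      (∀ x ∈ E.I, ∀ y ∈ E.I, (isLoadOf a x ∨ isStoreTo a x) →
        (isLoadOf a y ∨ isStoreTo a y) → x ≠ y → R x y ∨ R y x) ∧
      (∀ x ∈ E.I, ∀ y ∈ E.I, (isLoadOf a x ∨ isStoreTo a x) →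
        (isLoadOf a y ∨ isStoreTo a y) → po x y → R x y) ∧
      (∀ S L, E.rf S L → isLoadOf a L →
        R S L ∧ ∀ S' ∈ E.I, isStoreTo a S' → E.mo S S' → R L S') := by
  intro a
  refine ⟨locOrd E a, ?_, ?_, ?_, ?_, ?_⟩
  · rintro x (h | ⟨_, ⟨h, h'⟩ | ⟨_, _, h⟩⟩)
    · exact h.ne rfl
    · exact ld_not_st h' h
    · exact E.mo_irrefl _ h
  · rintro x y z (h | ⟨e, h⟩) (h' | ⟨e', h'⟩)
    · exact Or.inl (h.trans h')
    · exact Or.inl (e' ▸ h)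
    · exact Or.inl (e ▸ h')
    · refine Or.inr ⟨e.trans e', ?_⟩
      rcases h with ⟨h1, h2⟩ | ⟨h1, h2, h3⟩ <;> rcases h' with ⟨k1, k2⟩ | ⟨k1, k2, k3⟩
      · exact Or.inl ⟨h1, k2⟩
      · exact Or.inl ⟨h1, k2⟩
      · exact (ld_not_st h2 k1).elim
      · exact Or.inr ⟨h1, k2, E.mo_trans h3 k3⟩
  · intro x hx y hy ax ay hne
    by_cases e : cut E a x = cut E a y
    · rcases ax with lx | sx <;> rcases ay with ly | sy
      · rcases E.mo_total x hx y hy hne with h | h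
        · exact Or.inl (Or.inr ⟨e, Or.inr ⟨lx, ly, h⟩⟩)
        · exact Or.inr (Or.inr ⟨e.symm, Or.inr ⟨ly, lx, h⟩⟩)
      · exact Or.inr (Or.inr ⟨e.symm, Or.inl ⟨sy, lx⟩⟩)
      · exact Or.inl (Or.inr ⟨e, Or.inl ⟨sx, ly⟩⟩)
      · exfalso
        have h1 := mem_cut_store sy (e ▸ self_mem_cut hx sx)
        have h2 := mem_cut_store sx (e.symm ▸ self_mem_cut hy sy)
        rcases h1 with h1 | h1
        · exact hne h1
        rcases h2 with h2 | h2
        · exact hne h2.symm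
        exact E.mo_irrefl _ (E.mo_trans h1 h2)
    · rcases cut_total E a x y with h | h
      · exact Or.inl (Or.inl (h.ssubset_of_ne e))
      · exact Or.inr (Or.inl (h.ssubset_of_ne (Ne.symm e)))
  · intro x hx y hy ax ay hp
    rcases ax with lx | sx <;> rcases ay with ly | sy
    · have hm := po_ld_ld hx hy lx ly hp
      refine locOrd_of_subset ?_ (Or.inr ⟨lx, ly, hm⟩)
      rintro S ⟨hS, sS, T, ⟨hT, sT, rfl | ⟨_, h⟩⟩, hST⟩
      · exact (ld_not_st lx sT).elim
      · exact ⟨hS, sS, T, ⟨hT, sT, Or.inr ⟨ly, h.imp (fun h => E.mo_trans h hm)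
          (fun h => po_tr h hp)⟩⟩, hST⟩
    · have hm := po_ld_st hx hy lx sy hp
      refine Or.inl (cut_ssubset_store hy sy ?_)
      rintro ⟨_, _, T, ⟨hT, sT, rfl | ⟨_, h⟩⟩, hST⟩
      · exact ld_not_st lx sT
      · have hTy : E.mo T y := by
          rcases h with h | h
          · exact E.mo_trans h hm
          · exact po_st_st hT hy sT sy (po_tr h hp)
        rcases hST with rfl | h2
        · exact E.mo_irrefl _ hTy
        · exact E.mo_irrefl _ (E.mo_trans h2 hTy)
    · exact locOrd_of_subset (cut_store_subset sx
        ⟨hx, sx, x, ⟨hx, sx, Or.inr ⟨ly, Or.inr hp⟩⟩, Or.inl rfl⟩) (Or.inl ⟨sx, ly⟩)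
    · have hm := po_st_st hx hy sx sy hp
      refine Or.inl (cut_ssubset_store hy sy fun h => ?_)
      rcases mem_cut_store sx h with h | h
      · exact E.mo_irrefl x (by rw [h] at hm; exact hm)
      · exact E.mo_irrefl _ (E.mo_trans hm h)
  · intro S L hrf hL
    obtain ⟨sS, hv, hmax⟩ := E.ldVal hrf hL
    obtain ⟨hS, _⟩ := E.rf_mem hrf
    refine ⟨locOrd_of_subset (cut_store_subset sS
      ⟨hS, sS, S, ⟨hS, sS, Or.inr ⟨hL, hv⟩⟩, Or.inl rfl⟩) (Or.inl ⟨sS, hL⟩), ?_⟩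
    intro S' hS' sS' hm
    refine Or.inl (cut_ssubset_store hS' sS' ?_)
    rintro ⟨_, _, T, ⟨hT, sT, rfl | ⟨_, h⟩⟩, hST⟩
    · exact ld_not_st hL sT
    · have hSS : E.mo S T := by
        rcases hST with rfl | h2
        · exact hm
        · exact E.mo_trans hm h2
      rcases hmax T hT sT h with rfl | h3
      · exact E.mo_irrefl _ hSS
      · exact E.mo_irrefl _ (E.mo_trans hSS h3)
end

section
/- Soundness of the WMM I²E model with respect to the WMM axiomatic model: for every finite execution of the WMM I²E abstract machine that ends with all store buffers empty, there exist relations <_po, <_mo, and rf over the executed instructions—where <_po is the per-processor execution order, <_mo is constructed by appending loads, fences, and dequeued stores as in the instrumented machine (with a load that reads a stale value inserted immediately before the store that overwrote its source), and rf maps each load to the store whose value it returned—such that the Inst-Order and Ld-Val axioms of WMM hold and every load returns the same value in both models. -/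
/-- A WMM axiomatic execution: a set of instructions `I`, a global memory
order `mo` (strict total on `I`), a reads-from relation `rf`, satisfying the
Inst-Order and Ld-Val axioms of WMM. -/
abbrev Buf := List (ℕ × ℕ)

def hasAddr (l : Buf) (a : ℕ) : Prop := a ∈ l.map Prod.fst

instance (l : Buf) (a : ℕ) : Decidable (hasAddr l a) :=
  inferInstanceAs (Decidable (a ∈ l.map Prod.fst))

def remAddr (l : Buf) (a : ℕ) : Buf := l.filter (fun e => e.1 ≠ a)

/-- State of the WMM I²E machine running a program `prog` (processor × index →
operation): atomic memory, store buffers and invalidation buffers (head =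
newest), per-processor count of executed instructions, and recorded load
results. -/
structure PSt where
  mem : ℕ → ℕ
  sb : ℕ → Buf
  ib : ℕ → Buf
  cnt : ℕ → ℕ
  res : ℕ → ℕ → ℕ

def setRes (res : ℕ → ℕ → ℕ) (i k v : ℕ) : ℕ → ℕ → ℕ :=
  fun j l => if j = i ∧ l = k then v else res j l

/-- Operations of the WMM I²E abstract machine executing `prog`. -/
inductive PStep (prog : ℕ → ℕ → IOp) : PSt → PSt → Prop
  | nm (s : PSt) (i : ℕ) (h : prog i (s.cnt i) = IOp.nm) :
      PStep prog s { s with cnt := Function.update s.cnt i (s.cnt i + 1) }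
  | store (s : PSt) (i a v : ℕ) (h : prog i (s.cnt i) = IOp.st a v) :
      PStep prog s
        { s with sb := Function.update s.sb i ((a, v) :: s.sb i),
                 ib := Function.update s.ib i (remAddr (s.ib i) a),
                 cnt := Function.update s.cnt i (s.cnt i + 1) }
  | commit (s : PSt) (i : ℕ) (h : prog i (s.cnt i) = IOp.commit)
      (he : s.sb i = []) :
      PStep prog s { s with cnt := Function.update s.cnt i (s.cnt i + 1) }
  | reconcile (s : PSt) (i : ℕ) (h : prog i (s.cnt i) = IOp.reconcile) :
      PStep prog s
        { s with ib := Function.update s.ib i [],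
                 cnt := Function.update s.cnt i (s.cnt i + 1) }
  | ldSb (s : PSt) (i a v : ℕ) (l1 l2 : Buf) (h : prog i (s.cnt i) = IOp.ld a)
      (hsb : s.sb i = l1 ++ (a, v) :: l2) (hy : ¬ hasAddr l1 a) :
      PStep prog s
        { s with res := setRes s.res i (s.cnt i) v,
                 cnt := Function.update s.cnt i (s.cnt i + 1) }
  | ldMem (s : PSt) (i a : ℕ) (h : prog i (s.cnt i) = IOp.ld a)
      (hn : ¬ hasAddr (s.sb i) a) :
      PStep prog s
        { s with res := setRes s.res i (s.cnt i) (s.mem a),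
                 ib := Function.update s.ib i (remAddr (s.ib i) a),
                 cnt := Function.update s.cnt i (s.cnt i + 1) }
  | ldIb (s : PSt) (i a v : ℕ) (l1 l2 : Buf) (h : prog i (s.cnt i) = IOp.ld a)
      (hn : ¬ hasAddr (s.sb i) a) (hib : s.ib i = l1 ++ (a, v) :: l2) :
      PStep prog s
        { s with res := setRes s.res i (s.cnt i) v,
                 ib := Function.update s.ib i (l1 ++ (a, v) :: remAddr l2 a),
                 cnt := Function.update s.cnt i (s.cnt i + 1) }
  | deqSb (s : PSt) (i a v : ℕ) (l1 l2 : Buf)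
      (hsb : s.sb i = l1 ++ (a, v) :: l2) (hold : ¬ hasAddr l2 a) :
      PStep prog s
        { s with mem := Function.update s.mem a v,
                 sb := Function.update s.sb i (l1 ++ l2),
                 ib := fun j => if j = i ∨ hasAddr (s.sb j) a then s.ib j
                                else (a, s.mem a) :: s.ib j }

def PInit (m0 : ℕ → ℕ) : PSt :=
  { mem := m0, sb := fun _ => [], ib := fun _ => [],
    cnt := fun _ => 0, res := fun _ _ => 0 }

/-- The initialization store instruction for address `a` (on the reserved
processor 0). -/
def initInstr (m0 : ℕ → ℕ) (a : ℕ) : Instr := ⟨0, a, IOp.st a (m0 a)⟩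


/-- Lexicographic comparison of keys. -/
def klt (p q p' q' : ℕ) : Prop := p < p' ∨ (p = p' ∧ q < q')

/-- Ghost store-buffer entry: address, value, program index. -/
structure SE where
  a : ℕ
  v : ℕ
  k : ℕ

/-- Ghost invalidation-buffer entry: address, value, source store, overwrite time. -/
structure IE where
  a : ℕ
  v : ℕ
  p : ℕ
  k : ℕ
  T : ℕ

/-- Ghost state. `(kp, kq)` is the memory-order key of a performed instruction. -/
structure Gh where
  now : ℕ
  D : ℕ → ℕ → Prop
  kp : ℕ → ℕ → ℕ
  kq : ℕ → ℕ → ℕ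
  sb : ℕ → List SE
  ib : ℕ → List IE
  sp : ℕ → ℕ
  si : ℕ → ℕ
  rp : ℕ → ℕ → ℕ
  ri : ℕ → ℕ → ℕ

/-- The store `(xp, xk)` satisfies Ld-Val for the load `(i, k)` of `a` with key `(p, q)`. -/
def LV (P : ℕ → ℕ → IOp) (D : ℕ → ℕ → Prop) (kp kq : ℕ → ℕ → ℕ)
    (xp xk i k a v p q : ℕ) : Prop :=
  P xp xk = IOp.st a v ∧
  ((D xp xk ∧ klt (kp xp xk) (kq xp xk) p q) ∨ (xp = i ∧ xk < k)) ∧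
  ∀ j l w, P j l = IOp.st a w →
    ((D j l ∧ klt (kp j l) (kq j l) p q) ∨ (j = i ∧ l < k)) →
    (j = xp ∧ l = xk) ∨
    ((D xp xk → D j l ∧ klt (kp j l) (kq j l) (kp xp xk) (kq xp xk)) ∧
     (¬ D xp xk → D j l ∨ (j = xp ∧ l < xk)))

structure IbOk (P : ℕ → ℕ → IOp) (g : Gh) (i : ℕ) (e : IE) : Prop where
  hD : g.D e.p e.k
  hP : P e.p e.k = IOp.st e.a e.v
  hT : 2 ≤ e.T ∧ e.T ≤ g.now
  hlt : g.kp e.p e.k < e.T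
  hmax : ∀ j l w, g.D j l → P j l = IOp.st e.a w → g.kp j l < e.T →
    (j = e.p ∧ l = e.k) ∨ klt (g.kp j l) (g.kq j l) (g.kp e.p e.k) (g.kq e.p e.k)
  hsb : ∀ x ∈ g.sb i, x.a ≠ e.a
  hst : ∀ l w, g.D i l → P i l = IOp.st e.a w → g.kp i l < e.T
  hld : ∀ l, g.D i l → P i l = IOp.ld e.a → g.kp i l < e.T
  hrec : ∀ l, g.D i l → P i l = IOp.reconcile → g.kp i l < e.T

structure GInv (P : ℕ → ℕ → IOp) (s : PSt) (g : Gh) : Prop where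
  hnow : 1 ≤ g.now
  msb : ∀ i, s.sb i = (g.sb i).map (fun e => (e.a, e.v))
  mib : ∀ i, s.ib i = (g.ib i).map (fun e => (e.a, e.v))
  ini : ∀ k, g.D 0 k ∧ g.kp 0 k = 0 ∧ g.kq 0 k = k
  key : ∀ i k, i ≠ 0 → g.D i k → k < s.cnt i ∧ 1 ≤ g.kp i k ∧ g.kp i k ≤ g.kq i k ∧
    g.kq i k ≤ g.now
  keyst : ∀ i k a v, i ≠ 0 → g.D i k → P i k = IOp.st a v → g.kp i k = g.kq i k
  inj : ∀ i k j l, i ≠ 0 → j ≠ 0 → g.D i k → g.D j l → g.kq i k = g.kq j l → i = j ∧ k = l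
  und : ∀ i k, i ≠ 0 → k < s.cnt i → ¬ g.D i k → ∃ e ∈ g.sb i, e.k = k
  sbok : ∀ i, ∀ e ∈ g.sb i, i ≠ 0 ∧ e.k < s.cnt i ∧ ¬ g.D i e.k ∧ P i e.k = IOp.st e.a e.v
  sbord : ∀ i, (g.sb i).Pairwise (fun e f => f.k < e.k)
  src : ∀ a, g.D (g.sp a) (g.si a) ∧ P (g.sp a) (g.si a) = IOp.st a (s.mem a) ∧
    ∀ j l w, g.D j l → P j l = IOp.st a w → (j = g.sp a ∧ l = g.si a) ∨
      klt (g.kp j l) (g.kq j l) (g.kp (g.sp a) (g.si a)) (g.kq (g.sp a) (g.si a))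
  ibok : ∀ i, ∀ e ∈ g.ib i, IbOk P g i e
  ibord : ∀ i, (g.ib i).Pairwise (fun e f => f.T < e.T)
  iord : ∀ i k l, i ≠ 0 → g.D i l → k < l → ordTable (P i k) (P i l) →
    g.D i k ∧ klt (g.kp i k) (g.kq i k) (g.kp i l) (g.kq i l)
  ldv : ∀ i k a, i ≠ 0 → g.D i k → P i k = IOp.ld a →
    LV P g.D g.kp g.kq (g.rp i k) (g.ri i k) i k a (s.res i k) (g.kp i k) (g.kq i k)

theorem inv_exec {P : ℕ → ℕ → IOp} {s : PSt} {g : Gh} (inv : GInv P s g) (i : ℕ) (hi : i ≠ 0)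
    (hns : ∀ a v, P i (s.cnt i) ≠ IOp.st a v) (p : ℕ) (hp : 1 ≤ p) (hp' : p ≤ g.now + 1)
    (hord : ∀ k < s.cnt i, ordTable (P i k) (P i (s.cnt i)) →
      g.D i k ∧ klt (g.kp i k) (g.kq i k) p (g.now + 1))
    (s' : PSt) (l' : List IE)
    (hsub : l'.Sublist (g.ib i))
    (hl1 : ∀ e ∈ l', P i (s.cnt i) = IOp.ld e.a → p < e.T)
    (hl2 : ∀ e ∈ l', P i (s.cnt i) = IOp.reconcile → p < e.T)
    (e1 : s'.mem = s.mem) (e2 : s'.sb = s.sb)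
    (e3 : s'.ib = Function.update s.ib i (l'.map (fun e => (e.a, e.v))))
    (e4 : s'.cnt = Function.update s.cnt i (s.cnt i + 1))
    (e5 : ∀ j l, ¬ (j = i ∧ l = s.cnt i) → s'.res j l = s.res j l)
    (xp xk : ℕ)
    (hrf : ∀ a, P i (s.cnt i) = IOp.ld a →
      LV P g.D g.kp g.kq xp xk i (s.cnt i) a (s'.res i (s.cnt i)) p (g.now + 1)) :
    ∃ g', GInv P s' g' := by
  have hnD : ¬ g.D i (s.cnt i) := fun h => absurd (inv.key i _ hi h).1 (lt_irrefl _)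
  refine ⟨{ g with
    now := g.now + 1
    D := fun j l => g.D j l ∨ (j = i ∧ l = s.cnt i)
    kp := setRes g.kp i (s.cnt i) p
    kq := setRes g.kq i (s.cnt i) (g.now + 1)
    ib := Function.update g.ib i l'
    rp := setRes g.rp i (s.cnt i) xp
    ri := setRes g.ri i (s.cnt i) xk }, ?_⟩
  have hk1 : ∀ (f : ℕ → ℕ → ℕ) j l v, g.D j l → setRes f i (s.cnt i) v j l = f j l := by
    intro f j l v h
    unfold setRes
    rw [if_neg]
    rintro ⟨rfl, rfl⟩
    exact hnD h
  have hk2 : ∀ (f : ℕ → ℕ → ℕ) v, setRes f i (s.cnt i) v i (s.cnt i) = v := by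
    intro f v
    simp [setRes]
  have hLV : ∀ yp yk j k a v q r, (j ≠ i ∨ k ≤ s.cnt i) →
      LV P g.D g.kp g.kq yp yk j k a v q r →
      LV P (fun j l => g.D j l ∨ (j = i ∧ l = s.cnt i)) (setRes g.kp i (s.cnt i) p)
        (setRes g.kq i (s.cnt i) (g.now + 1)) yp yk j k a v q r := by
    intro yp yk j k a v q r hjk ⟨h1, h2, h3⟩
    have hy : ¬ (yp = i ∧ yk = s.cnt i) := by
      rintro ⟨rfl, rfl⟩
      exact hns _ _ h1
    refine ⟨h1, ?_, ?_⟩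
    · rcases h2 with ⟨h2, h2'⟩ | h2
      · left
        rw [hk1 _ _ _ _ h2, hk1 _ _ _ _ h2]
        exact ⟨Or.inl h2, h2'⟩
      · exact Or.inr h2
    · intro j' l' w hw hh
      have hy' : ¬ (j' = i ∧ l' = s.cnt i) := by
        rintro ⟨rfl, rfl⟩
        exact hns _ _ hw
      have := h3 j' l' w hw (by
        rcases hh with ⟨hh, hh'⟩ | hh
        · have hh := hh.resolve_right hy'
          rw [hk1 _ _ _ _ hh, hk1 _ _ _ _ hh] at hh'
          exact Or.inl ⟨hh, hh'⟩
        · exact Or.inr hh)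
      have a1 : setRes g.kp i (s.cnt i) p j' l' = g.kp j' l' := by simp [setRes, hy']
      have a2 : setRes g.kq i (s.cnt i) (g.now + 1) j' l' = g.kq j' l' := by simp [setRes, hy']
      have a3 : setRes g.kp i (s.cnt i) p yp yk = g.kp yp yk := by simp [setRes, hy]
      have a4 : setRes g.kq i (s.cnt i) (g.now + 1) yp yk = g.kq yp yk := by simp [setRes, hy]
      simp only [a1, a2, a3, a4]
      rcases this with h | ⟨h4, h5⟩
      · exact Or.inl h
      · right
        constructor
        · intro hd
          have := h4 (hd.resolve_right hy)
          exact ⟨Or.inl this.1, this.2⟩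
        · intro hd
          rcases h5 (fun h => hd (Or.inl h)) with h | h
          · exact Or.inl (Or.inl h)
          · exact Or.inr h
  have hibok : ∀ j, ∀ e ∈ g.ib j, (j = i → P i (s.cnt i) = IOp.ld e.a → p < e.T) →
      (j = i → P i (s.cnt i) = IOp.reconcile → p < e.T) →
      IbOk P { g with
        now := g.now + 1
        D := fun j l => g.D j l ∨ (j = i ∧ l = s.cnt i)
        kp := setRes g.kp i (s.cnt i) p
        kq := setRes g.kq i (s.cnt i) (g.now + 1)
        ib := Function.update g.ib i l'
        rp := setRes g.rp i (s.cnt i) xp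
        ri := setRes g.ri i (s.cnt i) xk } j e := by
    intro j e he c1 c2
    have ok := inv.ibok j e he
    refine ⟨Or.inl ok.hD, ok.hP, ⟨ok.hT.1, Nat.le_succ_of_le ok.hT.2⟩, ?_, ?_, ok.hsb, ?_, ?_, ?_⟩
    · simp only [hk1 _ _ _ _ ok.hD]
      exact ok.hlt
    · intro j' l' w hd hw
      have hd : g.D j' l' := by
        rcases hd with hd | ⟨rfl, rfl⟩
        · exact hd
        · exact absurd hw (hns _ _)
      simp only [hk1 _ _ _ _ ok.hD, hk1 _ _ _ _ hd]
      exact ok.hmax j' l' w hd hw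
    · intro l w hd hw
      rcases hd with hd | ⟨rfl, rfl⟩
      · simp only [hk1 _ _ _ _ hd]
        exact ok.hst l w hd hw
      · exact absurd hw (hns _ _)
    · intro l hd hw
      rcases hd with hd | ⟨rfl, rfl⟩
      · simp only [hk1 _ _ _ _ hd]
        exact ok.hld l hd hw
      · simp only [hk2]
        exact c1 rfl hw
    · intro l hd hw
      rcases hd with hd | ⟨rfl, rfl⟩
      · simp only [hk1 _ _ _ _ hd]
        exact ok.hrec l hd hw
      · simp only [hk2]
        exact c2 rfl hw
  have hcnt : ∀ j, s.cnt j ≤ s'.cnt j := by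
    intro j
    rw [e4]
    by_cases hj : j = i
    · subst hj; simp
    · simp [hj]
  have hcnti : s'.cnt i = s.cnt i + 1 := by simp [e4]
  constructor
  case hnow => exact Nat.le_succ_of_le inv.hnow
  case msb => rw [e2]; exact inv.msb
  case mib =>
    intro j
    rw [e3]
    by_cases hj : j = i
    · subst hj; simp
    · simp [hj, inv.mib j]
  case ini =>
    intro k
    have := inv.ini k
    simp only [hk1 _ _ _ _ this.1]
    exact ⟨Or.inl this.1, this.2⟩
  case key =>
    intro j k hj hd
    rcases hd with hd | ⟨rfl, rfl⟩
    · simp only [hk1 _ _ _ _ hd]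
      have := inv.key j k hj hd
      have := hcnt j
      omega
    · simp only [hk2]
      omega
  case keyst =>
    intro j k a v hj hd hw
    rcases hd with hd | ⟨rfl, rfl⟩
    · simp only [hk1 _ _ _ _ hd]
      exact inv.keyst j k a v hj hd hw
    · exact absurd hw (hns _ _)
  case inj =>
    intro j k j' l hj hj' hd hd'
    rcases hd with hd | ⟨rfl, rfl⟩ <;> rcases hd' with hd' | ⟨rfl, rfl⟩
    · simp only [hk1 _ _ _ _ hd, hk1 _ _ _ _ hd']
      exact inv.inj j k j' l hj hj' hd hd'
    · simp only [hk1 _ _ _ _ hd, hk2]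
      have := inv.key j k hj hd
      omega
    · simp only [hk1 _ _ _ _ hd', hk2]
      have := inv.key j' l hj' hd'
      omega
    · simp
  case und =>
    intro j k hj hk hd
    rw [not_or] at hd
    refine inv.und j k hj ?_ hd.1
    by_cases hji : j = i
    · subst hji
      rw [hcnti] at hk
      have : k ≠ s.cnt j := fun h => hd.2 ⟨rfl, h⟩
      omega
    · simpa [e4, hji] using hk
  case sbok =>
    intro j e he
    have := inv.sbok j e he
    refine ⟨this.1, lt_of_lt_of_le this.2.1 (hcnt j), ?_, this.2.2.2⟩
    rintro (h | ⟨rfl, h⟩)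
    · exact this.2.2.1 h
    · omega
  case sbord => exact inv.sbord
  case src =>
    intro a
    have := inv.src a
    rw [e1]
    refine ⟨Or.inl this.1, this.2.1, ?_⟩
    intro j l w hd hw
    have hd : g.D j l := by
      rcases hd with hd | ⟨rfl, rfl⟩
      · exact hd
      · exact absurd hw (hns _ _)
    simp only [hk1 _ _ _ _ this.1, hk1 _ _ _ _ hd]
    exact this.2.2 j l w hd hw
  case ibok =>
    intro j e he
    by_cases hj : j = i
    · subst hj
      simp only [Function.update_self] at he
      exact hibok _ e (hsub.subset he) (fun _ => hl1 e he) (fun _ => hl2 e he)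
    · simp only [Function.update_of_ne hj] at he
      exact hibok _ e he (fun h => absurd h hj) (fun h => absurd h hj)
  case ibord =>
    intro j
    by_cases hj : j = i
    · subst hj
      simp only [Function.update_self]
      exact (inv.ibord _).sublist hsub
    · simp only [Function.update_of_ne hj]
      exact inv.ibord j
  case iord =>
    intro j k l hj hd hkl hot
    rcases hd with hd | ⟨rfl, rfl⟩
    · have := inv.iord j k l hj hd hkl hot
      simp only [hk1 _ _ _ _ hd, hk1 _ _ _ _ this.1]
      exact ⟨Or.inl this.1, this.2⟩
    · have := hord k hkl hot
      simp only [hk2, hk1 _ _ _ _ this.1]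
      exact ⟨Or.inl this.1, this.2⟩
  case ldv =>
    intro j k a hj hd hop
    rcases hd with hd | ⟨rfl, rfl⟩
    · simp only [hk1 _ _ _ _ hd]
      have hk := (inv.key j k hj hd).1
      rw [e5 j k (by rintro ⟨rfl, rfl⟩; omega)]
      refine hLV _ _ _ _ _ _ _ _ ?_ (inv.ldv j k a hj hd hop)
      by_cases hji : j = i
      · subst hji
        right; omega
      · exact Or.inl hji
    · simp only [hk2]
      exact hLV _ _ _ _ _ _ _ _ (Or.inr le_rfl) (hrf a hop)

theorem inv_store {P : ℕ → ℕ → IOp} {s : PSt} {g : Gh} (inv : GInv P s g) (i a v : ℕ) (hi : i ≠ 0)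
    (hop : P i (s.cnt i) = IOp.st a v) :
    ∃ g', GInv P { s with
      sb := Function.update s.sb i ((a, v) :: s.sb i)
      ib := Function.update s.ib i (remAddr (s.ib i) a)
      cnt := Function.update s.cnt i (s.cnt i + 1) } g' := by
  have hnD : ¬ g.D i (s.cnt i) := fun h => absurd (inv.key i _ hi h).1 (lt_irrefl _)
  have hcnt : ∀ j, s.cnt j ≤ Function.update s.cnt i (s.cnt i + 1) j := by
    intro j
    by_cases hj : j = i
    · subst hj; simp
    · simp [hj]
  refine ⟨{ g with
    sb := Function.update g.sb i (⟨a, v, s.cnt i⟩ :: g.sb i)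
    ib := Function.update g.ib i ((g.ib i).filter (fun e => e.a ≠ a)) }, ?_⟩
  constructor
  case hnow => exact inv.hnow
  case msb =>
    intro j
    by_cases hj : j = i
    · subst hj; simp [inv.msb j]
    · simp [hj, inv.msb j]
  case mib =>
    intro j
    by_cases hj : j = i
    · subst hj
      simp only [Function.update_self, inv.mib j, remAddr, List.filter_map]
      rfl
    · simp [hj, inv.mib j]
  case ini => exact inv.ini
  case key =>
    intro j k hj hd
    have := inv.key j k hj hd
    exact ⟨lt_of_lt_of_le this.1 (hcnt j), this.2⟩
  case keyst => exact inv.keyst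
  case inj => exact inv.inj
  case und =>
    intro j k hj hk hd
    by_cases hji : j = i
    · subst hji
      simp only [Function.update_self] at hk ⊢
      by_cases hkk : k = s.cnt j
      · exact ⟨_, List.mem_cons_self, hkk.symm⟩
      · obtain ⟨e, he, h⟩ := inv.und j k hj (by omega) hd
        exact ⟨e, List.mem_cons_of_mem _ he, h⟩
    · simp only [Function.update_of_ne hji] at hk ⊢
      exact inv.und j k hj hk hd
  case sbok =>
    intro j e he
    have old : e ∈ g.sb j → j ≠ 0 ∧ e.k < Function.update s.cnt i (s.cnt i + 1) j ∧
        ¬ g.D j e.k ∧ P j e.k = IOp.st e.a e.v := by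
      intro he
      have := inv.sbok j e he
      exact ⟨this.1, lt_of_lt_of_le this.2.1 (hcnt j), this.2.2⟩
    by_cases hji : j = i
    · subst hji
      simp only [Function.update_self, List.mem_cons] at he
      rcases he with rfl | he
      · exact ⟨hi, by simp, hnD, hop⟩
      · exact old he
    · simp only [Function.update_of_ne hji] at he
      exact old he
  case sbord =>
    intro j
    by_cases hji : j = i
    · subst hji
      simp only [Function.update_self, List.pairwise_cons]
      exact ⟨fun e he => (inv.sbok j e he).2.1, inv.sbord j⟩
    · simp only [Function.update_of_ne hji]
      exact inv.sbord j
  case src => exact inv.src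
  case ibok =>
    intro j e he
    by_cases hji : j = i
    · subst hji
      simp only [Function.update_self, List.mem_filter] at he
      have ok := inv.ibok j e he.1
      refine ⟨ok.hD, ok.hP, ok.hT, ok.hlt, ok.hmax, ?_, ok.hst, ok.hld, ok.hrec⟩
      intro x hx
      simp only [Function.update_self, List.mem_cons] at hx
      rcases hx with rfl | hx
      · have := he.2
        simp only [ne_eq, decide_not, Bool.not_eq_eq_eq_not, Bool.not_true, decide_eq_false_iff_not] at this
        exact fun h => this h.symm
      · exact ok.hsb x hx
    · simp only [Function.update_of_ne hji] at he
      have ok := inv.ibok j e he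
      refine ⟨ok.hD, ok.hP, ok.hT, ok.hlt, ok.hmax, ?_, ok.hst, ok.hld, ok.hrec⟩
      simp only [Function.update_of_ne hji]
      exact ok.hsb
  case ibord =>
    intro j
    by_cases hji : j = i
    · subst hji
      simp only [Function.update_self]
      exact (inv.ibord j).sublist List.filter_sublist
    · simp only [Function.update_of_ne hji]
      exact inv.ibord j
  case iord => exact inv.iord
  case ldv => exact inv.ldv

theorem inv_deq {P : ℕ → ℕ → IOp} {s : PSt} {g : Gh} (inv : GInv P s g) (i a v : ℕ)
    (l1 l2 : Buf) (hsb : s.sb i = l1 ++ (a, v) :: l2) (hold : ¬ hasAddr l2 a) :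
    ∃ g', GInv P { s with
      mem := Function.update s.mem a v
      sb := Function.update s.sb i (l1 ++ l2)
      ib := fun j => if j = i ∨ hasAddr (s.sb j) a then s.ib j
        else (a, s.mem a) :: s.ib j } g' := by
  have hm := inv.msb i
  rw [hsb] at hm
  obtain ⟨m1, mm, hm0, hm1, hm2⟩ := List.map_eq_append_iff.1 hm.symm
  obtain ⟨x, m2, rfl, hx, hm3⟩ := List.map_eq_cons_iff.1 hm2
  simp only [Prod.mk.injEq] at hx
  obtain ⟨hxa, hxv⟩ := hx
  obtain ⟨n, hn⟩ : ∃ n, n = x.k := ⟨_, rfl⟩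
  have hxm : x ∈ g.sb i := by rw [hm0]; simp
  obtain ⟨hi, hnc, hnD, hop⟩ := inv.sbok i x hxm
  rw [← hn] at hnc hnD hop
  rw [hxa, hxv] at hop
  have hpw := inv.sbord i
  rw [hm0, List.pairwise_append, List.pairwise_cons] at hpw
  obtain ⟨pw1, ⟨pwx, pw2⟩, pw12⟩ := hpw
  have hno : ∀ e ∈ m2, e.a ≠ a := by
    intro e he h
    apply hold
    rw [← hm3, hasAddr]
    simp only [List.map_map, List.mem_map, Function.comp]
    exact ⟨e, he, h⟩
  -- an undone same-address store before `n` is impossible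
  have hfifo : ∀ l w, P i l = IOp.st a w → l < n → g.D i l := by
    intro l w hw hl
    by_contra hd
    obtain ⟨e, he, hek⟩ := inv.und i l hi (by omega) hd
    have hea : e.a = a := by
      have := (inv.sbok i e he).2.2.2
      rw [hek, hw] at this
      injection this with h1 h2
      exact h1.symm
    rw [hm0] at he
    simp only [List.mem_append, List.mem_cons] at he
    rcases he with he | rfl | he
    · have := pw12 e he x (by simp)
      omega
    · omega
    · exact hno e he hea
  have hk1 : ∀ (f : ℕ → ℕ → ℕ) j l v, g.D j l → setRes f i n v j l = f j l := by
    intro f j l v h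
    unfold setRes
    rw [if_neg]
    rintro ⟨rfl, rfl⟩
    exact hnD h
  have hk2 : ∀ (f : ℕ → ℕ → ℕ) v, setRes f i n v i n = v := by
    intro f v
    simp [setRes]
  have hle : ∀ j l, g.D j l → g.kp j l ≤ g.now := by
    intro j l hd
    by_cases hj : j = 0
    · subst hj
      rw [(inv.ini l).2.1]; omega
    · have := inv.key j l hj hd
      omega
  have hsbsub : ∀ j, ∀ e ∈ Function.update g.sb i (m1 ++ m2) j, e ∈ g.sb j := by
    intro j e he
    by_cases hj : j = i
    · subst hj
      rw [Function.update_self] at he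
      rw [hm0]
      simp only [List.mem_append, List.mem_cons] at he ⊢
      tauto
    · rwa [Function.update_of_ne hj] at he
  have hnosb : ∀ j, ¬ hasAddr (s.sb j) a → ∀ e ∈ g.sb j, e.a ≠ a := by
    intro j h e he hea
    apply h
    rw [inv.msb j, hasAddr]
    simp only [List.map_map, List.mem_map, Function.comp]
    exact ⟨e, he, hea⟩
  refine ⟨{ g with
    now := g.now + 1
    D := fun j l => g.D j l ∨ (j = i ∧ l = n)
    kp := setRes g.kp i n (g.now + 1)
    kq := setRes g.kq i n (g.now + 1)
    sb := Function.update g.sb i (m1 ++ m2)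
    ib := fun j => if j = i ∨ hasAddr (s.sb j) a then g.ib j
      else ⟨a, s.mem a, g.sp a, g.si a, g.now + 1⟩ :: g.ib j
    sp := Function.update g.sp a i
    si := Function.update g.si a n }, ?_⟩
  constructor
  case hnow => exact Nat.le_succ_of_le inv.hnow
  case msb =>
    intro j
    by_cases hj : j = i
    · subst hj
      simp [hm1, hm3]
    · simp [hj, inv.msb j]
  case mib =>
    intro j
    by_cases hc : j = i ∨ hasAddr (s.sb j) a
    · simp only [if_pos hc, inv.mib j]
    · simp only [if_neg hc, inv.mib j, List.map_cons]
  case ini =>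
    intro k
    have := inv.ini k
    simp only [hk1 _ _ _ _ this.1]
    exact ⟨Or.inl this.1, this.2⟩
  case key =>
    intro j k hj hd
    rcases hd with hd | ⟨rfl, rfl⟩
    · simp only [hk1 _ _ _ _ hd]
      have := inv.key j k hj hd
      omega
    · simp only [hk2]
      omega
  case keyst =>
    intro j k a v hj hd hw
    rcases hd with hd | ⟨rfl, rfl⟩
    · simp only [hk1 _ _ _ _ hd]
      exact inv.keyst j k a v hj hd hw
    · simp only [hk2]
  case inj =>
    intro j k j' l hj hj' hd hd'
    rcases hd with hd | ⟨rfl, rfl⟩ <;> rcases hd' with hd' | ⟨rfl, rfl⟩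
    · simp only [hk1 _ _ _ _ hd, hk1 _ _ _ _ hd']
      exact inv.inj j k j' l hj hj' hd hd'
    · simp only [hk1 _ _ _ _ hd, hk2]
      have := inv.key j k hj hd
      omega
    · simp only [hk1 _ _ _ _ hd', hk2]
      have := inv.key j' l hj' hd'
      omega
    · simp
  case und =>
    intro j k hj hk hd
    rw [not_or] at hd
    obtain ⟨e, he, hek⟩ := inv.und j k hj hk hd.1
    refine ⟨e, ?_, hek⟩
    by_cases hji : j = i
    · subst hji
      simp only [Function.update_self]
      rw [hm0] at he
      simp only [List.mem_append, List.mem_cons] at he ⊢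
      rcases he with he | rfl | he
      · exact Or.inl he
      · exact (hd.2 (by constructor <;> first | rfl | trivial | omega)).elim
      · exact Or.inr he
    · simp only [Function.update_of_ne hji]
      exact he
  case sbok =>
    intro j e he
    have := inv.sbok j e (hsbsub j e he)
    refine ⟨this.1, this.2.1, ?_, this.2.2.2⟩
    rintro (h | ⟨rfl, h⟩)
    · exact this.2.2.1 h
    · simp only [Function.update_self, List.mem_append] at he
      rcases he with he | he
      · have := pw12 e he x (by simp)
        omega
      · have := pwx e he
        omega
  case sbord =>
    intro j
    by_cases hji : j = i
    · subst hji
      simp only [Function.update_self]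
      refine (inv.sbord j).sublist ?_
      rw [hm0]
      exact List.Sublist.append_left (List.sublist_cons_self _ _) _
    · simp only [Function.update_of_ne hji]
      exact inv.sbord j
  case src =>
    intro b
    by_cases hb : b = a
    · subst hb
      simp only [Function.update_self]
      refine ⟨by simp, hop, ?_⟩
      intro j l w hd hw
      rcases hd with hd | hd
      · right
        rw [hk2, hk2, hk1 _ _ _ _ hd]
        exact Or.inl (Nat.lt_succ_of_le (hle j l hd))
      · exact Or.inl hd
    · simp only [Function.update_of_ne hb]
      have := inv.src b
      refine ⟨Or.inl this.1, this.2.1, ?_⟩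
      intro j l w hd hw
      have hd : g.D j l := by
        rcases hd with hd | ⟨rfl, rfl⟩
        · exact hd
        · rw [hop] at hw
          injection hw with h1 h2
          exact absurd h1.symm hb
      simp only [hk1 _ _ _ _ this.1, hk1 _ _ _ _ hd]
      exact this.2.2 j l w hd hw
  case ibok =>
    intro j e he
    have hcase : e ∈ g.ib j ∨ (¬ (j = i ∨ hasAddr (s.sb j) a) ∧
        e = ⟨a, s.mem a, g.sp a, g.si a, g.now + 1⟩) := by
      by_cases hc : j = i ∨ hasAddr (s.sb j) a
      · simp only [if_pos hc] at he
        exact Or.inl he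
      · simp only [if_neg hc, List.mem_cons] at he
        rcases he with he | he
        · exact Or.inr ⟨hc, he⟩
        · exact Or.inl he
    rcases hcase with he | ⟨hc, rfl⟩
    · have ok := inv.ibok j e he
      refine ⟨Or.inl ok.hD, ok.hP, ⟨ok.hT.1, Nat.le_succ_of_le ok.hT.2⟩, ?_, ?_, ?_, ?_, ?_, ?_⟩
      · simp only [hk1 _ _ _ _ ok.hD]
        exact ok.hlt
      · intro j' l' w hd hw hT
        rcases hd with hd | ⟨rfl, rfl⟩
        · simp only [hk1 _ _ _ _ ok.hD, hk1 _ _ _ _ hd] at hT ⊢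
          exact ok.hmax j' l' w hd hw hT
        · simp only [hk2] at hT
          have := ok.hT
          omega
      · intro y hy
        exact ok.hsb y (hsbsub j y hy)
      · intro l w hd hw
        rcases hd with hd | ⟨rfl, rfl⟩
        · simp only [hk1 _ _ _ _ hd]
          exact ok.hst l w hd hw
        · rw [hop] at hw
          injection hw with h1 h2
          exact absurd (hxa.trans h1) (ok.hsb x hxm)
      · intro l hd hw
        rcases hd with hd | ⟨rfl, rfl⟩
        · simp only [hk1 _ _ _ _ hd]
          exact ok.hld l hd hw
        · rw [hop] at hw
          cases hw
      · intro l hd hw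
        rcases hd with hd | ⟨rfl, rfl⟩
        · simp only [hk1 _ _ _ _ hd]
          exact ok.hrec l hd hw
        · rw [hop] at hw
          cases hw
    · rw [not_or] at hc
      have hs := inv.src a
      have hj : ∀ l, (g.D j l ∨ (j = i ∧ l = n)) → setRes g.kp i n (g.now + 1) j l < g.now + 1 := by
        intro l hd
        have hd := hd.resolve_right (fun h => hc.1 h.1)
        rw [hk1 _ _ _ _ hd]
        exact Nat.lt_succ_of_le (hle j l hd)
      refine ⟨Or.inl hs.1, hs.2.1, ?_, ?_, ?_, ?_, fun l w hd _ => hj l hd, fun l hd _ => hj l hd,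
        fun l hd _ => hj l hd⟩
      · have := inv.hnow
        exact ⟨Nat.succ_le_succ this, le_rfl⟩
      · simp only [hk1 _ _ _ _ hs.1]
        exact Nat.lt_succ_of_le (hle _ _ hs.1)
      · intro j' l' w hd hw hT
        rcases hd with hd | ⟨rfl, rfl⟩
        · simp only [hk1 _ _ _ _ hs.1, hk1 _ _ _ _ hd] at hT ⊢
          exact hs.2.2 j' l' w hd hw
        · simp only [hk2] at hT
          omega
      · intro y hy
        exact hnosb j hc.2 y (hsbsub j y hy)
  case ibord =>
    intro j
    by_cases hc : j = i ∨ hasAddr (s.sb j) a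
    · simp only [if_pos hc]
      exact inv.ibord j
    · simp only [if_neg hc, List.pairwise_cons]
      exact ⟨fun e he => Nat.lt_succ_of_le (inv.ibok j e he).hT.2, inv.ibord j⟩
  case iord =>
    intro j k l hj hd hkl hot
    rcases hd with hd | ⟨rfl, rfl⟩
    · have := inv.iord j k l hj hd hkl hot
      simp only [hk1 _ _ _ _ hd, hk1 _ _ _ _ this.1]
      exact ⟨Or.inl this.1, this.2⟩
    · have hdk : g.D j k := by
        by_contra hd
        obtain ⟨e, he, hek⟩ := inv.und j k hj (by omega) hd
        have hpe := (inv.sbok j e he).2.2.2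
        rw [hek] at hpe
        rw [hpe, hop] at hot
        have hea : e.a = a := hot
        rw [hea] at hpe
        exact hd (hfifo k _ hpe hkl)
      simp only [hk2, hk1 _ _ _ _ hdk]
      exact ⟨Or.inl hdk, Or.inl (Nat.lt_succ_of_le (hle _ _ hdk))⟩
  case ldv =>
    intro j k b hj hd hw
    have hd : g.D j k := by
      rcases hd with hd | ⟨rfl, rfl⟩
      · exact hd
      · rw [hop] at hw
        cases hw
    obtain ⟨h1, h2, h3⟩ := inv.ldv j k b hj hd hw
    have hjk := hle j k hd
    simp only [hk1 _ _ _ _ hd]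
    generalize g.rp j k = yp at h1 h2 h3 ⊢
    generalize g.ri j k = yk at h1 h2 h3 ⊢
    refine ⟨h1, ?_, ?_⟩
    · rcases h2 with ⟨h2, h2'⟩ | h2
      · left
        rw [hk1 _ _ _ _ h2, hk1 _ _ _ _ h2]
        exact ⟨Or.inl h2, h2'⟩
      · exact Or.inr h2
    · intro j' l' w hw' hh
      have hprev : (g.D j' l' ∧ klt (g.kp j' l') (g.kq j' l') (g.kp j k) (g.kq j k)) ∨
          (j' = j ∧ l' < k) := by
        rcases hh with ⟨hh | ⟨rfl, rfl⟩, hh'⟩ | hh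
        · rw [hk1 _ _ _ _ hh, hk1 _ _ _ _ hh] at hh'
          exact Or.inl ⟨hh, hh'⟩
        · rw [hk2, hk2] at hh'
          unfold klt at hh'
          omega
        · exact Or.inr hh
      rcases h3 j' l' w hw' hprev with h | ⟨h4, h5⟩
      · exact Or.inl h
      · by_cases hy : yp = i ∧ yk = n
        · obtain ⟨rfl, rfl⟩ := hy
          rw [hop] at h1
          injection h1 with h11 h12
          subst h11
          by_cases hne : j' = yp ∧ l' = yk
          · exact Or.inl hne
          have hd' : g.D j' l' := by
            rcases h5 hnD with h | ⟨rfl, h⟩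
            · exact h
            · exact hfifo l' w hw' h
          right
          refine ⟨fun _ => ⟨Or.inl hd', ?_⟩, fun _ => Or.inl (Or.inl hd')⟩
          rw [hk2, hk2, hk1 _ _ _ _ hd', hk1 _ _ _ _ hd']
          exact Or.inl (Nat.lt_succ_of_le (hle _ _ hd'))
        · right
          constructor
          · intro hdy
            have hdy := hdy.resolve_right hy
            have := h4 hdy
            rw [hk1 _ _ _ _ hdy, hk1 _ _ _ _ hdy, hk1 _ _ _ _ this.1, hk1 _ _ _ _ this.1]
            exact ⟨Or.inl this.1, this.2⟩
          · intro hdy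
            rcases h5 (fun h => hdy (Or.inl h)) with h | h
            · exact Or.inl (Or.inl h)
            · exact Or.inr h

/-- Operation of each instruction identifier, processor 0 holding the initial stores. -/
def opOf (prog : ℕ → ℕ → IOp) (m0 : ℕ → ℕ) (i k : ℕ) : IOp :=
  if i = 0 then IOp.st k (m0 k) else prog i k

theorem opOf_zero (prog : ℕ → ℕ → IOp) (m0 : ℕ → ℕ) (k : ℕ) :
    opOf prog m0 0 k = IOp.st k (m0 k) := by simp [opOf]

theorem opOf_ne (prog : ℕ → ℕ → IOp) (m0 : ℕ → ℕ) (i k : ℕ) (hi : i ≠ 0) :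
    opOf prog m0 i k = prog i k := by simp [opOf, hi]

theorem inv_ini (prog : ℕ → ℕ → IOp) (m0 : ℕ → ℕ) :
    ∃ g, GInv (opOf prog m0) (PInit m0) g := by
  refine ⟨⟨1, fun j _ => j = 0, fun _ _ => 0, fun _ k => k, fun _ => [], fun _ => [],
    fun _ => 0, fun a => a, fun _ _ => 0, fun _ _ => 0⟩, ?_⟩
  constructor
  case src =>
    intro a
    refine ⟨rfl, opOf_zero _ _ _, ?_⟩
    intro j l w hd hw
    simp only at hd
    subst hd
    rw [opOf_zero] at hw
    injection hw with h1 h2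
    exact Or.inl ⟨rfl, h1⟩
  all_goals simp [PInit]
  all_goals intros
  all_goals simp_all

theorem hasAddr_map {l : List SE} {a : ℕ} :
    hasAddr (l.map (fun e => (e.a, e.v))) a ↔ ∃ e ∈ l, e.a = a := by
  simp [hasAddr, List.mem_map]

theorem remAddr_map (l : List IE) (a : ℕ) :
    remAddr (l.map (fun e => (e.a, e.v))) a =
      (l.filter (fun e => e.a ≠ a)).map (fun e => (e.a, e.v)) := by
  simp only [remAddr, List.filter_map]
  rfl

theorem inv_und {P : ℕ → ℕ → IOp} {s : PSt} {g : Gh} (inv : GInv P s g) {i k : ℕ} (hi : i ≠ 0)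
    (hk : k < s.cnt i) (hns : ∀ a v, P i k ≠ IOp.st a v) : g.D i k := by
  by_contra hd
  obtain ⟨e, he, rfl⟩ := inv.und i k hi hk hd
  exact hns _ _ (inv.sbok i e he).2.2.2

theorem inv_klt {P : ℕ → ℕ → IOp} {s : PSt} {g : Gh} (inv : GInv P s g) {i k : ℕ}
    (hd : g.D i k) (q : ℕ) : klt (g.kp i k) (g.kq i k) (g.now + 1) q := by
  left
  by_cases hi : i = 0
  · subst hi
    have := inv.ini k
    omega
  · have := inv.key i k hi hd
    omega

theorem inv_ord_nonst {P : ℕ → ℕ → IOp} {s : PSt} {g : Gh} (inv : GInv P s g) {i : ℕ} (hi : i ≠ 0)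
    (op : IOp) (hop : ∀ a v, ¬ ordTable (IOp.st a v) op) :
    ∀ k < s.cnt i, ordTable (P i k) op →
      g.D i k ∧ klt (g.kp i k) (g.kq i k) (g.now + 1) (g.now + 1) := by
  intro k hk ho
  have hd : g.D i k := inv_und inv hi hk (by
    intro a v h
    rw [h] at ho
    exact hop _ _ ho)
  exact ⟨hd, inv_klt inv hd _⟩

theorem inv_step {P : ℕ → ℕ → IOp} {prog : ℕ → ℕ → IOp} (hp0 : ∀ k, prog 0 k = IOp.nm)
    (hP : ∀ i k, i ≠ 0 → P i k = prog i k) {s s' : PSt} {g : Gh}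
    (inv : GInv P s g) (hs : PStep prog s s') : ∃ g', GInv P s' g' := by
  cases hs with
  | nm i h =>
    by_cases hi : i = 0
    · subst hi
      refine ⟨g, inv.hnow, inv.msb, inv.mib, inv.ini, ?_, inv.keyst, inv.inj, ?_, ?_, inv.sbord,
        inv.src, inv.ibok, inv.ibord, inv.iord, inv.ldv⟩
      · intro i k hi hd
        simp only [Function.update_of_ne hi]
        exact inv.key i k hi hd
      · intro i k hi hk
        simp only [Function.update_of_ne hi] at hk
        exact inv.und i k hi hk
      · intro i e he
        have := inv.sbok i e he
        simp only [Function.update_of_ne this.1]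
        exact this
    · rw [← hP _ _ hi] at h
      refine inv_exec inv i hi (by simp [h]) (g.now + 1) (by omega) le_rfl ?_ _ (g.ib i)
        (List.Sublist.refl _) (by simp [h]) (by simp [h]) rfl rfl ?_ rfl (fun _ _ _ => rfl) 0 0
        (by simp [h])
      · rw [h]
        exact inv_ord_nonst inv hi _ (fun _ _ h => h)
      · rw [← inv.mib i, Function.update_eq_self]
  | store i a v h =>
    have hi : i ≠ 0 := by
      rintro rfl
      rw [hp0] at h
      cases h
    exact inv_store inv i a v hi (by rw [hP _ _ hi, h])
  | commit i h he =>
    have hi : i ≠ 0 := by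
      rintro rfl
      rw [hp0] at h
      cases h
    rw [← hP _ _ hi] at h
    refine inv_exec inv i hi (by simp [h]) (g.now + 1) (by omega) le_rfl ?_ _ (g.ib i)
      (List.Sublist.refl _) (by simp [h]) (by simp [h]) rfl rfl ?_ rfl (fun _ _ _ => rfl) 0 0
      (by simp [h])
    · intro k hk _
      have hd : g.D i k := by
        by_contra hd
        obtain ⟨e, hm, -⟩ := inv.und i k hi hk hd
        have := inv.msb i
        rw [he, eq_comm, List.map_eq_nil_iff] at this
        rw [this] at hm
        cases hm
      exact ⟨hd, inv_klt inv hd _⟩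
    · rw [← inv.mib i, Function.update_eq_self]
  | reconcile i h =>
    have hi : i ≠ 0 := by
      rintro rfl
      rw [hp0] at h
      cases h
    rw [← hP _ _ hi] at h
    refine inv_exec inv i hi (by simp [h]) (g.now + 1) (by omega) le_rfl ?_ _ []
      (List.nil_sublist _) (by simp) (by simp) rfl rfl rfl rfl (fun _ _ _ => rfl) 0 0
      (by simp [h])
    rw [h]
    exact inv_ord_nonst inv hi _ (fun _ _ h => h)
  | ldSb i a v l1 l2 h hsb hy =>
    have hi : i ≠ 0 := by
      rintro rfl
      rw [hp0] at h
      cases h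
    rw [← hP _ _ hi] at h
    have hm := inv.msb i
    rw [hsb] at hm
    obtain ⟨m1, mm, hm0, hm1, hm2⟩ := List.map_eq_append_iff.1 hm.symm
    obtain ⟨x, m2, rfl, hx, hm3⟩ := List.map_eq_cons_iff.1 hm2
    simp only [Prod.mk.injEq] at hx
    obtain ⟨hxa, hxv⟩ := hx
    have hxm : x ∈ g.sb i := by rw [hm0]; simp
    obtain ⟨-, hnc, hnD, hop⟩ := inv.sbok i x hxm
    have hpw := inv.sbord i
    rw [hm0, List.pairwise_append, List.pairwise_cons] at hpw
    obtain ⟨pw1, ⟨pwx, pw2⟩, pw12⟩ := hpw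
    refine inv_exec inv i hi (by simp [h]) (g.now + 1) (by omega) le_rfl ?_ _ (g.ib i)
      (List.Sublist.refl _) ?_ (by simp [h]) rfl rfl ?_ rfl ?_ i x.k ?_
    · rw [h]
      exact inv_ord_nonst inv hi _ (fun _ _ h => h)
    · intro e he hea
      rw [h] at hea
      injection hea with hea
      exact absurd (hxa.trans hea) ((inv.ibok i e he).hsb x hxm)
    · rw [← inv.mib i, Function.update_eq_self]
    · intro j l hjl
      simp [setRes, hjl]
    · intro b hb
      rw [h] at hb
      injection hb with hb
      subst hb
      rw [hxa, hxv] at hop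
      refine ⟨?_, Or.inr ⟨rfl, hnc⟩, ?_⟩
      · simp [setRes, hop]
      · intro j l w hw hh
        by_cases hd : g.D j l
        · exact Or.inr ⟨fun h => absurd h hnD, fun _ => Or.inl hd⟩
        · have hh := hh.resolve_left (fun h => hd h.1)
          obtain ⟨rfl, hl⟩ := hh
          obtain ⟨e, he, rfl⟩ := inv.und j l hi hl hd
          have hpe := (inv.sbok j e he).2.2.2
          rw [hw] at hpe
          injection hpe with hea hev
          rw [hm0] at he
          simp only [List.mem_append, List.mem_cons] at he
          rcases he with he | rfl | he
          · exfalso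
            apply hy
            rw [← hm1, hasAddr_map]
            exact ⟨e, he, hea.symm⟩
          · exact Or.inl ⟨rfl, rfl⟩
          · exact Or.inr ⟨fun h => absurd h hnD, fun _ => Or.inr ⟨rfl, pwx e he⟩⟩
  | ldMem i a h hn =>
    have hi : i ≠ 0 := by
      rintro rfl
      rw [hp0] at h
      cases h
    rw [← hP _ _ hi] at h
    refine inv_exec inv i hi (by simp [h]) (g.now + 1) (by omega) le_rfl ?_ _
      ((g.ib i).filter (fun e => e.a ≠ a))
      List.filter_sublist ?_ (by simp [h]) rfl rfl ?_ rfl ?_ (g.sp a) (g.si a) ?_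
    · rw [h]
      exact inv_ord_nonst inv hi _ (fun _ _ h => h)
    · intro e he hea
      rw [h] at hea
      injection hea with hea
      have := (List.mem_filter.1 he).2
      simp [hea] at this
    · rw [← remAddr_map, ← inv.mib i]
    · intro j l hjl
      simp [setRes, hjl]
    · intro b hb
      rw [h] at hb
      injection hb with hb
      subst hb
      have hs := inv.src a
      refine ⟨?_, Or.inl ⟨hs.1, inv_klt inv hs.1 _⟩, ?_⟩
      · simp [setRes, hs.2.1]
      · intro j l w hw hh
        have hd : g.D j l := by
          rcases hh with hh | ⟨rfl, hl⟩
          · exact hh.1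
          · by_contra hd
            obtain ⟨e, he, rfl⟩ := inv.und j l hi hl hd
            have hpe := (inv.sbok j e he).2.2.2
            rw [hw] at hpe
            injection hpe with hea hev
            apply hn
            rw [inv.msb, hasAddr_map]
            exact ⟨e, he, hea.symm⟩
        rcases hs.2.2 j l w hd hw with h | h
        · exact Or.inl h
        · exact Or.inr ⟨fun _ => ⟨hd, h⟩, fun h' => absurd hs.1 h'⟩
  | ldIb i a v l1 l2 h hn hib =>
    have hi : i ≠ 0 := by
      rintro rfl
      rw [hp0] at h
      cases h
    rw [← hP _ _ hi] at h
    have hm := inv.mib i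
    rw [hib] at hm
    obtain ⟨m1, mm, hm0, hm1, hm2⟩ := List.map_eq_append_iff.1 hm.symm
    obtain ⟨x, m2, rfl, hx, hm3⟩ := List.map_eq_cons_iff.1 hm2
    simp only [Prod.mk.injEq] at hx
    obtain ⟨hxa, hxv⟩ := hx
    have hxm : x ∈ g.ib i := by rw [hm0]; simp
    have ok := inv.ibok i x hxm
    have hT := ok.hT
    have hpw := inv.ibord i
    rw [hm0, List.pairwise_append, List.pairwise_cons] at hpw
    obtain ⟨pw1, ⟨pwx, pw2⟩, pw12⟩ := hpw
    refine inv_exec inv i hi (by simp [h]) (x.T - 1) (by omega) (by omega) ?_ _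
      (m1 ++ x :: m2.filter (fun e => e.a ≠ a)) ?_ ?_ (by simp [h]) rfl rfl ?_ rfl ?_ x.p x.k ?_
    · intro k hk ho
      rw [h] at ho
      have hd : g.D i k := inv_und inv hi hk (by
        intro a v h
        rw [h] at ho
        exact ho)
      have hkey := inv.key i k hi hd
      have hlt : g.kp i k < x.T := by
        cases hpk : P i k with
        | ld b =>
          rw [hpk] at ho
          have hb : b = a := ho
          refine ok.hld k hd ?_
          rw [hpk, hb, hxa]
        | reconcile => exact ok.hrec k hd hpk
        | st b w => rw [hpk] at ho; exact ho.elim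
        | commit => rw [hpk] at ho; exact ho.elim
        | nm => rw [hpk] at ho; exact ho.elim
      refine ⟨hd, ?_⟩
      unfold klt
      omega
    · rw [hm0]
      exact List.Sublist.append_left (List.Sublist.cons_cons _ List.filter_sublist) _
    · intro e he hea
      rw [h] at hea
      injection hea with hea
      simp only [List.mem_append, List.mem_cons, List.mem_filter] at he
      rcases he with he | rfl | he
      · have := pw12 e he x (by simp)
        omega
      · omega
      · have := he.2
        simp [hea] at this
    · simp only [List.map_append, List.map_cons, ← remAddr_map, hm1, hm3, hxa, hxv]
    · intro j l hjl
      simp [setRes, hjl]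
    · intro b hb
      rw [h] at hb
      injection hb with hb
      subst hb
      have hPx := ok.hP
      have hltx := ok.hlt
      rw [hxa, hxv] at hPx
      refine ⟨?_, Or.inl ⟨ok.hD, ?_⟩, ?_⟩
      · simp [setRes, hPx]
      · unfold klt
        by_cases hx0 : x.p = 0
        · have := inv.ini x.k
          rw [hx0]
          omega
        · have h1 := inv.key x.p x.k hx0 ok.hD
          have h2 := inv.keyst x.p x.k _ _ hx0 ok.hD hPx
          omega
      · intro j l w hw hh
        rw [← hxa] at hw
        have hd : g.D j l ∧ g.kp j l < x.T := by
          rcases hh with ⟨hd, hh⟩ | ⟨rfl, hl⟩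
          · refine ⟨hd, ?_⟩
            unfold klt at hh
            omega
          · have hd : g.D j l := by
              by_contra hd
              obtain ⟨e, he, rfl⟩ := inv.und j l hi hl hd
              have hpe := (inv.sbok j e he).2.2.2
              rw [hw] at hpe
              injection hpe with hea hev
              exact ok.hsb e he hea.symm
            exact ⟨hd, ok.hst l w hd hw⟩
        rcases ok.hmax j l w hd.1 hw hd.2 with h | h
        · exact Or.inl h
        · exact Or.inr ⟨fun _ => ⟨hd.1, h⟩, fun h' => absurd ok.hD h'⟩
  | deqSb i a v l1 l2 hsb hold => exact inv_deq inv i a v l1 l2 hsb hold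

/-- Soundness of WMM I²E w.r.t. the WMM axiomatic model: for
every finite I²E execution ending with all store buffers empty, there exist a
memory order `mo` and reads-from `rf` over the executed instructions (together
with the initialization stores) such that `mo` is strict and total, the
Inst-Order and Ld-Val axioms hold, and every executed load reads from a store
holding exactly the value the machine returned for it. -/
theorem wmm_i2e_sound (prog : ℕ → ℕ → IOp) (m0 : ℕ → ℕ)
    (hp0 : ∀ k, prog 0 k = IOp.nm)  -- processor 0 is reserved for init stores
    (s : PSt) (h : Relation.ReflTransGen (PStep prog) (PInit m0) s)
    (hemp : ∀ i, s.sb i = []) :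
    ∃ (I : Set Instr) (mo rf : Instr → Instr → Prop),
      I = { x : Instr | (x.proc ≠ 0 ∧ x.idx < s.cnt x.proc ∧
                          x.op = prog x.proc x.idx) ∨
                        (∃ a, x = initInstr m0 a) } ∧
      (∀ x, ¬ mo x x) ∧
      (∀ x y z, mo x y → mo y z → mo x z) ∧
      (∀ x ∈ I, ∀ y ∈ I, x ≠ y → mo x y ∨ mo y x) ∧
      -- Axiom Inst-Order:
      (∀ x ∈ I, ∀ y ∈ I, po x y → ordTable x.op y.op → mo x y) ∧
      (∀ S L, rf S L → S ∈ I ∧ L ∈ I) ∧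
      -- Axiom Ld-Val:
      (∀ S L a, rf S L → L.op = IOp.ld a →
        isStoreTo a S ∧ (mo S L ∨ po S L) ∧
        ∀ S' ∈ I, isStoreTo a S' → (mo S' L ∨ po S' L) → S' = S ∨ mo S' S) ∧
      -- every executed load returns the same value in both models:
      (∀ i k a, i ≠ 0 → k < s.cnt i → prog i k = IOp.ld a →
        ∃ S, rf S ⟨i, k, IOp.ld a⟩ ∧ S.op = IOp.st a (s.res i k)) := by
  obtain ⟨g, inv⟩ : ∃ g, GInv (opOf prog m0) s g := by
    clear hemp
    induction h with
    | refl => exact inv_ini prog m0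
    | tail _ hs ih =>
      obtain ⟨g, inv⟩ := ih
      exact inv_step hp0 (fun i k hi => opOf_ne prog m0 i k hi) inv hs
  have hall : ∀ i k, i ≠ 0 → k < s.cnt i → g.D i k := by
    intro i k hi hk
    by_contra hd
    obtain ⟨e, he, -⟩ := inv.und i k hi hk hd
    have := inv.msb i
    rw [hemp i, eq_comm, List.map_eq_nil_iff] at this
    rw [this] at he
    cases he
  obtain ⟨I, hI⟩ : ∃ I : Set Instr, I = { x : Instr | (x.proc ≠ 0 ∧ x.idx < s.cnt x.proc ∧
      x.op = prog x.proc x.idx) ∨ (∃ a, x = initInstr m0 a) } := ⟨_, rfl⟩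
  have hmem : ∀ x ∈ I, x.op = opOf prog m0 x.proc x.idx ∧ g.D x.proc x.idx := by
    intro x hx
    rw [hI] at hx
    rcases hx with ⟨h1, h2, h3⟩ | ⟨a, rfl⟩
    · exact ⟨by rw [h3, opOf_ne _ _ _ _ h1], hall _ _ h1 h2⟩
    · exact ⟨(opOf_zero prog m0 a).symm, (inv.ini a).1⟩
  have hmem' : ∀ i k, g.D i k → (⟨i, k, opOf prog m0 i k⟩ : Instr) ∈ I := by
    intro i k hd
    rw [hI]
    by_cases hi : i = 0
    · subst hi
      right
      exact ⟨k, by rw [opOf_zero]; rfl⟩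
    · left
      exact ⟨hi, (inv.key i k hi hd).1, opOf_ne _ _ _ _ hi⟩
  have hnz : ∀ x ∈ I, x.proc = 0 → ∃ a v, x.op = IOp.st a v := by
    intro x hx h0
    rw [(hmem x hx).1, h0, opOf_zero]
    exact ⟨_, _, rfl⟩
  refine ⟨I, fun x y => klt (g.kp x.proc x.idx) (g.kq x.proc x.idx) (g.kp y.proc y.idx)
      (g.kq y.proc y.idx),
    fun S L => S ∈ I ∧ L ∈ I ∧ S.proc = g.rp L.proc L.idx ∧ S.idx = g.ri L.proc L.idx,
    hI, ?_, ?_, ?_, ?_, ?_, ?_, ?_⟩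
  · intro x hx
    unfold klt at hx
    omega
  · intro x y z h1 h2
    unfold klt at *
    omega
  · intro x hx y hy hne
    have h1 := hmem x hx
    have h2 := hmem y hy
    have hid : ¬ (x.proc = y.proc ∧ x.idx = y.idx) := by
      rintro ⟨ha, hb⟩
      apply hne
      have hc : x.op = y.op := by rw [h1.1, h2.1, ha, hb]
      cases x
      cases y
      simp_all
    simp only [klt]
    by_cases hx0 : x.proc = 0
    · have kx := inv.ini x.idx
      by_cases hy0 : y.proc = 0
      · have ky := inv.ini y.idx
        rw [hx0, hy0] at hid ⊢
        have : x.idx ≠ y.idx := fun h => hid ⟨rfl, h⟩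
        omega
      · have ky := inv.key _ _ hy0 h2.2
        rw [hx0]
        omega
    · have kx := inv.key _ _ hx0 h1.2
      by_cases hy0 : y.proc = 0
      · have ky := inv.ini y.idx
        rw [hy0]
        omega
      · have : g.kq x.proc x.idx ≠ g.kq y.proc y.idx := fun h =>
          hid (inv.inj _ _ _ _ hx0 hy0 h1.2 h2.2 h)
        omega
  · intro x hx y hy hpo hot
    obtain ⟨hpp, hlt⟩ := hpo
    have h1 := hmem x hx
    have h2 := hmem y hy
    rw [h1.1, h2.1, hpp] at hot
    by_cases hy0 : y.proc = 0
    · rw [hy0, opOf_zero, opOf_zero] at hot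
      have : x.idx = y.idx := hot
      omega
    · have := inv.iord y.proc x.idx y.idx hy0 h2.2 hlt hot
      rw [hpp]
      exact this.2
  · rintro S L ⟨h1, h2, -⟩
    exact ⟨h1, h2⟩
  · rintro S L a ⟨hS, hL, e1, e2⟩ hop
    have hL' := hmem L hL
    have hS' := hmem S hS
    have hL0 : L.proc ≠ 0 := by
      intro h0
      obtain ⟨b, v, hb⟩ := hnz L hL h0
      rw [hop] at hb
      cases hb
    obtain ⟨v1, v2, v3⟩ := inv.ldv L.proc L.idx a hL0 hL'.2 (by rw [← hL'.1, hop])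
    rw [← e1, ← e2] at v1 v2 v3
    refine ⟨⟨_, hS'.1.trans v1⟩, ?_, ?_⟩
    · rcases v2 with h | h
      · exact Or.inl h.2
      · exact Or.inr h
    · rintro T hT ⟨w, hw⟩ hh
      have hT' := hmem T hT
      rcases v3 T.proc T.idx w (by rw [← hT'.1, hw]) (by
        rcases hh with h | h
        · exact Or.inl ⟨hT'.2, h⟩
        · exact Or.inr h) with ⟨ha, hb⟩ | h
      · left
        have hc : T.op = S.op := by rw [hT'.1, hS'.1, ha, hb]
        cases T
        cases S
        simp_all
      · exact Or.inr (h.1 hS'.2).2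
  · intro i k a hi hk hop
    have hd := hall i k hi hk
    have hop' : opOf prog m0 i k = IOp.ld a := by rw [opOf_ne _ _ _ _ hi, hop]
    obtain ⟨v1, v2, v3⟩ := inv.ldv i k a hi hd hop'
    have hdS : g.D (g.rp i k) (g.ri i k) := by
      rcases v2 with h | ⟨h1, h2⟩
      · exact h.1
      · rw [h1]
        exact hall i _ hi (lt_trans h2 hk)
    refine ⟨⟨_, _, opOf prog m0 (g.rp i k) (g.ri i k)⟩, ⟨hmem' _ _ hdS, ?_, rfl, rfl⟩, v1⟩
    rw [← hop']
    exact hmem' i k hd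
end
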